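/- For n = (1,1,1), the local polynomial space spanned by the Courant hat translates equals the full space of affine polynomials: V_{(1,1,1)} = P₁, the space of bivariate polynomials of total degree ≤ 1. Moreover, for every n=(n₁,n₂,n₃)∈ℤ³ with all nᵢ≥1 and n ≠ (1,1,1), the space V_n is a proper linear subspace of P_{n₁+n₂+n₃−2}. -/

import Mathlib

/- ## The three-directional (type-I) grid -/

noncomputable section

open MvPolynomial Set Function

/-- Points of the plane. -/
abbrev Pt := ℝ × ℝ

/-- Bivariate real polynomials `ℝ[x,y]`. -/
abbrev BPoly := MvPolynomial (Fin 2) ℝ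

/-- Evaluation of a bivariate polynomial at a point of the plane. -/
def evalP (q : BPoly) (p : Pt) : ℝ := MvPolynomial.eval ![p.1, p.2] q

/-- Triangles of the three-directional grid `G`:  `⟨v, false⟩` is the "lower"
triangle with vertices `v, v+(1,0), v+(1,1)`, and `⟨v, true⟩` is the "upper"
triangle with vertices `v, v+(0,1), v+(1,1)`. -/
structure Tri where
  v : ℤ × ℤ
  up : Bool
deriving DecidableEq

namespace Tri

/-- The open triangle in the plane realizing a combinatorial triangle. -/
def toSet (T : Tri) : Set Pt :=
  if T.up then
    {p | (T.v.1 : ℝ) < p.1 ∧ p.1 - (T.v.1 : ℝ) < p.2 - (T.v.2 : ℝ) ∧ p.2 < (T.v.2 : ℝ) + 1}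
  else
    {p | (T.v.2 : ℝ) < p.2 ∧ p.2 - (T.v.2 : ℝ) < p.1 - (T.v.1 : ℝ) ∧ p.1 < (T.v.1 : ℝ) + 1}

/-- The closed triangle. -/
def cl (T : Tri) : Set Pt := closure T.toSet

/-- The three lattice vertices of a triangle. -/
def vertices (T : Tri) : Finset (ℤ × ℤ) :=
  if T.up then {T.v, (T.v.1, T.v.2 + 1), (T.v.1 + 1, T.v.2 + 1)}
  else {T.v, (T.v.1 + 1, T.v.2), (T.v.1 + 1, T.v.2 + 1)}

end Tri

/-- Edges of the grid: a lattice point together with a direction type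
(`0 ↦ e₁ = (1,0)`, `1 ↦ e₂ = (0,1)`, `2 ↦ e₃ = (1,1)`); the edge of type `i`
at `v` joins `v` to `v + eᵢ`. -/
abbrev Edge := (ℤ × ℤ) × Fin 3

/-- The three direction vectors `e₁, e₂, e₃`. -/
def dirZ : Fin 3 → ℤ × ℤ := ![(1, 0), (0, 1), (1, 1)]

/-- The three edges of a triangle. -/
def Tri.edges (T : Tri) : Finset Edge :=
  if T.up then {((T.v.1, T.v.2 + 1), 0), (T.v, 1), (T.v, 2)}
  else {(T.v, 0), ((T.v.1 + 1, T.v.2), 1), (T.v, 2)}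

/-- The open segment realizing an edge. -/
def Edge.seg (ε : Edge) : Set Pt :=
  {p | ∃ t : ℝ, 0 < t ∧ t < 1 ∧
    p = ((ε.1.1 : ℝ) + t * ((dirZ ε.2).1 : ℝ), (ε.1.2 : ℝ) + t * ((dirZ ε.2).2 : ℝ))}

/-- `M*`: the union of the closed triangles of a multicell domain. -/
def Mstar (M : Finset Tri) : Set Pt := ⋃ T ∈ M, T.cl

/-- `ℙ(M,V)`: continuous functions on `M*` whose restriction to each triangle
of `M` is the restriction of a polynomial in `V`. -/
def PP (M : Finset Tri) (V : Set BPoly) : Set (Pt → ℝ) :=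
  {f | ContinuousOn f (Mstar M) ∧ ∀ T ∈ M, ∃ q ∈ V, EqOn f (evalP q) T.toSet}

/-- The diamond of an edge: union of the closed triangles of `M` having `ε`
as an edge. -/
def diamond (M : Finset Tri) (ε : Edge) : Set Pt :=
  ⋃ T ∈ M.filter (fun T => ε ∈ T.edges), T.cl

/-- The spline space with edge smoothness `d` on the multicell domain `M`:
piecewise polynomials (pieces from `V`) which are `C^{dᵢ}` on the diamond of
every edge of type `i` of `M`. -/
def SplineSpace (M : Finset Tri) (V : Set BPoly) (d : Fin 3 → ℕ) : Set (Pt → ℝ) :=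
  {f | f ∈ PP M V ∧
    ∀ ε : Edge, (∃ T ∈ M, ε ∈ T.edges) → ContDiffOn ℝ (d ε.2) f (diamond M ε)}

/-- Directional derivative of a polynomial along an integer vector. -/
def dirD (e : ℤ × ℤ) (q : BPoly) : BPoly :=
  (e.1 : ℝ) • MvPolynomial.pderiv (0 : Fin 2) q + (e.2 : ℝ) • MvPolynomial.pderiv (1 : Fin 2) q

/-- The mixed directional derivative operator
`D_s = (∂_{e₁})^{s₁} (∂_{e₂})^{s₂} (∂_{e₃})^{s₃}`. -/
def Dmix (s : Fin 3 → ℕ) (q : BPoly) : BPoly :=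
  (dirD (dirZ 0))^[s 0] ((dirD (dirZ 1))^[s 1] ((dirD (dirZ 2))^[s 2] q))

/-- The index sets `Iᵢ^d`; `I₁^d = {s | s₂+s₃ ≤ d₁}` and cyclically. -/
def Iset (d : Fin 3 → ℕ) (i : Fin 3) : Set (Fin 3 → ℕ) :=
  {s | s (i + 1) + s (i + 2) ≤ d i}

/-- Two triangles of the grid are adjacent if they are distinct and share an edge. -/
def Adj (T T' : Tri) : Prop := T ≠ T' ∧ ∃ ε : Edge, ε ∈ T.edges ∧ ε ∈ T'.edges

/-- `c` is an edge-connected chain of length `m` from `T` to `T'`. -/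
def TriIsChain (T T' : Tri) (m : ℕ) (c : ℕ → Tri) : Prop :=
  c 0 = T ∧ c m = T' ∧ ∀ k < m, Adj (c k) (c (k + 1))

/-- The set of types of the edges crossed by a chain. -/
def chainTypes (m : ℕ) (c : ℕ → Tri) : Set (Fin 3) :=
  {i | ∃ k < m, ∃ ε : Edge, ε.2 = i ∧ ε ∈ (c k).edges ∧ ε ∈ (c (k + 1)).edges}

/-- Minimal length of an edge-connected chain between two triangles. -/
def minLen (T T' : Tri) : ℕ := sInf {m | ∃ c, TriIsChain T T' m c}

/-- The smoothness type `SmType(△,△')`: the types of the edges crossed by a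
shortest edge-connected chain from `△` to `△'`. -/
def SmType (T T' : Tri) : Set (Fin 3) :=
  {i | ∃ c, TriIsChain T T' (minLen T T') c ∧ i ∈ chainTypes (minLen T T') c}

/-- `q` is the polynomial piece of `f` on the triangle `T`. -/
def IsPiece (f : Pt → ℝ) (T : Tri) (q : BPoly) : Prop := EqOn f (evalP q) T.toSet

/-- The strongly regular spline space `Ŝ^d(M,V)`: piecewise polynomials such
that for any two triangles of `M` with intersecting closures, the derivatives
`D_s`, `s ∈ ⋂_{i ∈ SmType(△,△')} Iᵢ^d`, of the two polynomial pieces agree on the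
intersection of the closures (i.e. `D_s f` is continuous there). -/
def StrongSpline (M : Finset Tri) (V : Set BPoly) (d : Fin 3 → ℕ) : Set (Pt → ℝ) :=
  {f | f ∈ PP M V ∧
    ∀ T ∈ M, ∀ T' ∈ M, (T.cl ∩ T'.cl).Nonempty →
      ∀ s : Fin 3 → ℕ, (∀ i ∈ SmType T T', s ∈ Iset d i) →
        ∀ q q' : BPoly, IsPiece f T q → IsPiece f T' q' →
          ∀ x ∈ T.cl ∩ T'.cl, evalP (Dmix s q) x = evalP (Dmix s q') x}

/-- Kissing triangles: the closures intersect in exactly one point. -/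
def Kissing (T T' : Tri) : Prop := ∃ p : Pt, T.cl ∩ T'.cl = {p}

/-- An over-concave vertex of `M`: exactly one triangle of `star(ν)` is
missing from `M`. -/
def OverConcave (M : Finset Tri) (ν : ℤ × ℤ) : Prop :=
  ∃! T : Tri, ν ∈ T.vertices ∧ T ∉ M

/- ## Type-I box splines -/

/-- The Courant hat function `B_{(1,1,1)}`: the piecewise linear function on
`G` supported on `star((1,1))` with value `1` at `(1,1)` and `0` at all other
lattice points. -/
def hat (p : Pt) : ℝ :=
  max 0 (min (min (min p.1 p.2) (min (2 - p.1) (2 - p.2)))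
             (min (1 - (p.1 - p.2)) (1 + (p.1 - p.2))))

/-- The type-I box spline `B_{(n₁,n₂,n₃)}`, defined by repeated directional
convolution starting from the Courant hat function (the result is independent
of the order of the convolutions); junk value `0` if some `nᵢ = 0`. -/
noncomputable def boxN : ℕ → ℕ → ℕ → Pt → ℝ
  | 0, _, _, _ => 0
  | _ + 1, 0, _, _ => 0
  | _ + 1, _ + 1, 0, _ => 0
  | 1, 1, 1, p => hat p
  | a + 2, b + 1, c + 1, p =>
      ∫ t in (0:ℝ)..1, boxN (a + 1) (b + 1) (c + 1) (p.1 - t, p.2)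
  | 1, b + 2, c + 1, p =>
      ∫ t in (0:ℝ)..1, boxN 1 (b + 1) (c + 1) (p.1, p.2 - t)
  | 1, 1, c + 2, p =>
      ∫ t in (0:ℝ)..1, boxN 1 1 (c + 1) (p.1 - t, p.2 - t)
  termination_by a b c _ => a + b + c
  decreasing_by all_goals omega

/-- The translate `B_n(· - w)` of the box spline. -/
def trBox (n₁ n₂ n₃ : ℕ) (w : ℤ × ℤ) (p : Pt) : ℝ :=
  boxN n₁ n₂ n₃ (p.1 - (w.1 : ℝ), p.2 - (w.2 : ℝ))

/-- `Supp_n(△̂)`: lattice translates of `B_n` that do not vanish identically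
on the triangle `T`. -/
def activeSet (n₁ n₂ n₃ : ℕ) (T : Tri) : Set (ℤ × ℤ) :=
  {w | ¬ ∀ p ∈ T.toSet, trBox n₁ n₂ n₃ w p = 0}

/-- `c` is the coefficient vector of the polynomial `q` with respect to the
active box-spline translates on `T`:  `q|_T = Σ_β λ_T^β(q)·β|_T`. -/
def Represents (n₁ n₂ n₃ : ℕ) (T : Tri) (q : BPoly) (c : (ℤ × ℤ) →₀ ℝ) : Prop :=
  ↑c.support ⊆ activeSet n₁ n₂ n₃ T ∧
    ∀ p ∈ T.toSet, evalP q p = c.sum fun w a => a * trBox n₁ n₂ n₃ w p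

/-- `V_n` (relative to the triangle `T`): polynomials whose restriction to `T`
is a linear combination of the active box-spline translates on `T`. -/
def VSpace (n₁ n₂ n₃ : ℕ) (T : Tri) : Set BPoly :=
  {q | ∃ c, Represents n₁ n₂ n₃ T q c}


namespace BoxPf

def D (v : Pt) : Module.End ℝ (Pt → ℝ) where
  toFun f := fun p => f (p + v) - f p
  map_add' := by intros; ext; simp; ring
  map_smul' := by intros; ext; simp; ring

def E (v : Pt) : Module.End ℝ (Pt → ℝ) where
  toFun f := fun p => f (p + v)
  map_add' := by intros; ext; simp
  map_smul' := by intros; ext; simp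

lemma D_apply (v : Pt) (f : Pt → ℝ) (p : Pt) : D v f p = f (p + v) - f p := rfl
lemma E_apply (v : Pt) (f : Pt → ℝ) (p : Pt) : E v f p = f (p + v) := rfl

lemma D_comm (u v : Pt) : Commute (D u) (D v) := by
  refine LinearMap.ext fun f => funext fun p => ?_
  simp only [Module.End.mul_apply, D_apply, add_right_comm p u v]
  ring

lemma E_comm (u v : Pt) : Commute (E u) (D v) := by
  refine LinearMap.ext fun f => funext fun p => ?_
  simp only [Module.End.mul_apply, D_apply, E_apply, add_right_comm p u v]

def Cv (w : Pt) (f : Pt → ℝ) : Pt → ℝ := fun p => ∫ t in (0:ℝ)..1, f (p + t • w)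

lemma Cv_cont (w : Pt) {f : Pt → ℝ} (hf : Continuous f) : Continuous (Cv w f) := by
  apply intervalIntegral.continuous_parametric_intervalIntegral_of_continuous'
  unfold Function.uncurry
  fun_prop

lemma D_cont (v : Pt) {f : Pt → ℝ} (hf : Continuous f) : Continuous (D v f) := by
  change Continuous (fun p => f (p + v) - f p)
  fun_prop

lemma Dpow_cont (v : Pt) (n : ℕ) {f : Pt → ℝ} (hf : Continuous f) :
    Continuous ((D v ^ n) f) := by
  induction n with
  | zero => simpa using hf
  | succ n ih => rw [pow_succ', Module.End.mul_apply]; exact D_cont v ih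

lemma D_Cv (v w : Pt) {f : Pt → ℝ} (hf : Continuous f) : D v (Cv w f) = Cv w (D v f) := by
  funext p
  simp only [D_apply, Cv]
  rw [← intervalIntegral.integral_sub]
  · simp only [add_right_comm]
  · exact Continuous.intervalIntegrable (by fun_prop) _ _
  · exact Continuous.intervalIntegrable (by fun_prop) _ _

lemma Dpow_Cv (v w : Pt) (n : ℕ) {f : Pt → ℝ} (hf : Continuous f) :
    (D v ^ n) (Cv w f) = Cv w ((D v ^ n) f) := by
  induction n with
  | zero => simp
  | succ n ih =>
    rw [pow_succ', Module.End.mul_apply, ih, D_Cv v w (Dpow_cont v n hf), Module.End.mul_apply]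

lemma key (κ : ℝ) (u : Pt) {f : Pt → ℝ} (hf : Continuous f) (p : Pt) :
    D (κ • u) (Cv (-u) f) p = κ * (Cv (κ • u) f p - Cv (κ • u) f (p - u)) := by
  set G : ℝ → ℝ := fun t => f (p + t • u) with hG
  have hGc : Continuous G := by fun_prop
  have h1 : Cv (-u) f (p + κ • u) = ∫ t in (0:ℝ)..1, G (κ - t) := by
    simp only [Cv, hG]; congr 1; funext t; congr 1; module
  have h2 : Cv (-u) f p = ∫ t in (0:ℝ)..1, G (0 - t) := by
    simp only [Cv, hG]; congr 1; funext t; congr 1; module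
  have h3 : Cv (κ • u) f p = ∫ t in (0:ℝ)..1, G (κ * t) := by
    simp only [Cv, hG]; congr 1; funext t; congr 1; module
  have h4 : Cv (κ • u) f (p - u) = ∫ t in (0:ℝ)..1, G (κ * t - 1) := by
    simp only [Cv, hG]; congr 1; funext t; congr 1; module
  rw [D_apply, h1, h2, mul_sub, h3, h4, intervalIntegral.integral_comp_sub_left,
    intervalIntegral.integral_comp_sub_left, intervalIntegral.mul_integral_comp_mul_left,
    intervalIntegral.mul_integral_comp_mul_sub,
    intervalIntegral.integral_interval_sub_interval_comm' (hGc.intervalIntegrable _ _)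
    (hGc.intervalIntegrable _ _) (hGc.intervalIntegrable _ _)]
  simp

def Van (l : Pt →ₗ[ℝ] ℝ) (s : ℝ) (f : Pt → ℝ) : Prop :=
  ∀ (k : ℤ) (p : Pt), k + s ≤ l p → l p ≤ k + 1 - s → f p = 0

lemma Van_Cv {l : Pt →ₗ[ℝ] ℝ} {s h : ℝ} {f : Pt → ℝ} {w : Pt} (hw : |l w| ≤ h)
    (hf : Van l s f) : Van l (s + h) (Cv w f) := by
  intro k p h1 h2
  have : Cv w f p = ∫ t in (0:ℝ)..1, (0:ℝ) := by
    apply intervalIntegral.integral_congr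
    intro t ht
    rw [uIcc_of_le zero_le_one] at ht
    have : |t * l w| ≤ h := by
      rw [abs_mul, abs_of_nonneg ht.1]
      nlinarith [ht.2, abs_nonneg (l w)]
    rw [abs_le] at this
    apply hf k <;> simp only [map_add, map_smul, smul_eq_mul] <;> linarith
  simpa using this

lemma Van_step {l : Pt →ₗ[ℝ] ℝ} {s h : ℝ} (hh : 0 ≤ h) {f : Pt → ℝ} {u : Pt} {z : ℤ}
    (hz : l u = z) (hu : |l u| ≤ 1) (hc : Continuous f) (hf : Van l s f) :
    Van l (s + h) (D (h • u) (Cv (-u) f)) := by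
  intro k p h1 h2
  have hw : |l (h • u)| ≤ h := by
    rw [map_smul, smul_eq_mul, abs_mul, abs_of_nonneg hh]; nlinarith
  have := Van_Cv hw hf
  rw [key h u hc, this k p h1 h2, this (k - z) (p - u)]
  · simp
  · rw [map_sub, hz]; push_cast; linarith
  · rw [map_sub, hz]; push_cast; linarith

def Good (h : ℝ) (l : Pt →ₗ[ℝ] ℝ) (u v : Pt) (b c : ℕ) (f : Pt → ℝ) : Prop :=
  Van l ((b + c) * h) ((D (h • u) ^ b) ((D (h • v) ^ c) f))

lemma Good.swap {h : ℝ} {l : Pt →ₗ[ℝ] ℝ} {u v : Pt} {b c : ℕ} {f : Pt → ℝ}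
    (H : Good h l u v b c f) : Good h l v u c b f := by
  unfold Good at *
  rw [← Module.End.mul_apply, ((D_comm _ _).pow_pow c b).eq, Module.End.mul_apply, add_comm (c:ℝ)]
  exact H

lemma Good.stepU {h : ℝ} (hh : 0 ≤ h) {l : Pt →ₗ[ℝ] ℝ} {u v : Pt} {b c : ℕ} {f : Pt → ℝ} (z : ℤ)
    (hz : l u = z) (hu : |l u| ≤ 1) (hc : Continuous f)
    (H : Good h l u v b c f) : Good h l u v (b + 1) c (Cv (-u) f) := by
  unfold Good at *
  rw [pow_succ', Module.End.mul_apply, Dpow_Cv _ _ _ hc, Dpow_Cv _ _ _ (Dpow_cont _ _ hc)]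
  have := Van_step hh hz hu (Dpow_cont _ _ (Dpow_cont _ _ hc)) H
  convert this using 1
  push_cast; ring

lemma Good.stepV {h : ℝ} (hh : 0 ≤ h) {l : Pt →ₗ[ℝ] ℝ} {u v : Pt} {b c : ℕ} {f : Pt → ℝ} (z : ℤ)
    (hz : l v = z) (hu : |l v| ≤ 1) (hc : Continuous f)
    (H : Good h l u v b c f) : Good h l u v b (c + 1) (Cv (-v) f) :=
  (Good.stepU hh z hz hu hc H.swap).swap

lemma Good.stepE {h : ℝ} {l : Pt →ₗ[ℝ] ℝ} {u v e : Pt} {b c : ℕ} {f : Pt → ℝ}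
    (he : l e = 0) (hc : Continuous f)
    (H : Good h l u v b c f) : Good h l u v b c (Cv (-e) f) := by
  unfold Good at *
  rw [Dpow_Cv _ _ _ hc, Dpow_Cv _ _ _ (Dpow_cont _ _ hc)]
  have := Van_Cv (w := -e) (h := 0) (by simp [he]) H
  simpa using this

lemma Good.base {h : ℝ} (hh : 0 ≤ h) {l α β : Pt →ₗ[ℝ] ℝ} {u v : Pt} {f : Pt → ℝ}
    (hu : |l u| ≤ 1) (hv : |l v| ≤ 1) (hα : α u = 0) (hβ : β v = 0)
    (H : ∀ k : ℤ, ∃ A B : ℝ → ℝ, ∀ p, k ≤ l p → l p ≤ k + 1 → f p = A (α p) + B (β p)) :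
    Good h l u v 1 1 f := by
  intro k p h1 h2
  obtain ⟨A, B, hAB⟩ := H k
  rw [abs_le] at hu hv
  push_cast at h1 h2
  simp only [pow_one, D_apply]
  have a1 : h * l u ≤ h := by nlinarith
  have a2 : -h ≤ h * l u := by nlinarith
  have a3 : h * l v ≤ h := by nlinarith
  have a4 : -h ≤ h * l v := by nlinarith
  rw [hAB p, hAB (p + h • u), hAB (p + h • v), hAB (p + h • u + h • v)]
  · simp [hα, hβ]
  all_goals (try simp only [map_add, map_smul, smul_eq_mul]); linarith

def e1 : Pt := (1, 0)
def e2 : Pt := (0, 1)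
def e3 : Pt := (1, 1)
def lx : Pt →ₗ[ℝ] ℝ := LinearMap.fst ℝ ℝ ℝ
def ly : Pt →ₗ[ℝ] ℝ := LinearMap.snd ℝ ℝ ℝ
def lu : Pt →ₗ[ℝ] ℝ := lx - ly

lemma lx_apply (p : Pt) : lx p = p.1 := rfl
lemma ly_apply (p : Pt) : ly p = p.2 := rfl
lemma lu_apply (p : Pt) : lu p = p.1 - p.2 := rfl

structure AllGood (h : ℝ) (a b c : ℕ) (f : Pt → ℝ) : Prop where
  cont : Continuous f
  g1 : Good h ly e2 e3 b c f
  g2 : Good h lx e1 e3 a c f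
  g3 : Good h lu e1 e2 a b f

def rp (t : ℝ) : ℝ := max 0 t

lemma hat_zero {p : Pt} (hp : p.1 ≤ 0 ∨ p.2 ≤ 0 ∨ 2 ≤ p.1 ∨ 2 ≤ p.2 ∨ 1 ≤ p.1 - p.2 ∨ p.1 - p.2 ≤ -1) :
    hat p = 0 := by
  unfold hat
  apply max_eq_left
  simp only [min_le_iff]
  rcases hp with h | h | h | h | h | h
  · left; left; left; exact h
  · left; left; right; exact h
  · left; right; left; linarith
  · left; right; right; linarith
  · right; left; linarith
  · right; right; linarith

lemma hat_y0 {p : Pt} (h0 : 0 ≤ p.2) (h1 : p.2 ≤ 1) :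
    hat p = rp p.1 - rp (p.1 - p.2) - rp (p.1 - 1) + rp (p.1 - p.2 - 1) := by
  unfold hat rp; grind
lemma hat_y1 {p : Pt} (h0 : 1 ≤ p.2) (h1 : p.2 ≤ 2) :
    hat p = rp (p.1 - p.2 + 1) - rp (p.1 - 1) - rp (p.1 - p.2) + rp (p.1 - 2) := by
  unfold hat rp; grind
lemma hat_swap (x y : ℝ) : hat (x, y) = hat (y, x) := by
  unfold hat; grind
lemma hat_u0 {p : Pt} (h0 : 0 ≤ p.1 - p.2) (h1 : p.1 - p.2 ≤ 1) :
    hat p = rp p.2 - rp (p.1 - 1) - rp (p.2 - 1) + rp (p.1 - 2) := by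
  unfold hat rp; grind


lemma base_y (k : ℤ) : ∃ A B : ℝ → ℝ, ∀ p : Pt, k ≤ ly p → ly p ≤ k + 1 →
    hat p = A (lx p) + B (lu p) := by
  simp only [lx_apply, ly_apply, lu_apply]
  rcases lt_trichotomy k 0 with hk | hk | hk
  · have : (k:ℝ) + 1 ≤ 0 := by exact_mod_cast hk
    exact ⟨0, 0, fun p _ h2 => by rw [hat_zero (by grind)]; simp⟩
  · subst hk
    refine ⟨fun x => rp x - rp (x - 1), fun u => rp (u - 1) - rp u, fun p h1 h2 => ?_⟩
    rw [hat_y0 (by simpa using h1) (by simpa using h2)]; ring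
  · rcases eq_or_lt_of_le (show 1 ≤ k from hk) with hk | hk
    · subst hk
      refine ⟨fun x => rp (x - 2) - rp (x - 1), fun u => rp (u + 1) - rp u, fun p h1 h2 => ?_⟩
      push_cast at h1 h2
      rw [hat_y1 h1 (by linarith)]; ring
    · have : (2:ℝ) ≤ k := by exact_mod_cast hk
      exact ⟨0, 0, fun p h1 _ => by rw [hat_zero (by grind)]; simp⟩

lemma base_x (k : ℤ) : ∃ A B : ℝ → ℝ, ∀ p : Pt, k ≤ lx p → lx p ≤ k + 1 →
    hat p = A (ly p) + B (lu p) := by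
  obtain ⟨A, B, H⟩ := base_y k
  refine ⟨A, fun u => B (-u), fun p h1 h2 => ?_⟩
  have := H (p.2, p.1) h1 h2
  rw [hat_swap] at this
  rw [show p = (p.1, p.2) from rfl, this]
  simp [lx_apply, ly_apply, lu_apply]

lemma base_u (k : ℤ) : ∃ A B : ℝ → ℝ, ∀ p : Pt, k ≤ lu p → lu p ≤ k + 1 →
    hat p = A (ly p) + B (lx p) := by
  simp only [lx_apply, ly_apply, lu_apply]
  rcases lt_trichotomy k 0 with hk | hk | hk
  · rcases eq_or_lt_of_le (show k ≤ -1 by omega) with hk | hk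
    · subst hk
      refine ⟨fun y => rp (y - 2) - rp (y - 1), fun x => rp x - rp (x - 1), fun p h1 h2 => ?_⟩
      push_cast at h1 h2
      have := hat_u0 (p := (p.2, p.1)) (by simp; linarith) (by simp; linarith)
      rw [hat_swap] at this
      rw [show p = (p.1, p.2) from rfl, this]; ring
    · have : (k:ℝ) + 1 ≤ -1 := by exact_mod_cast (show k + 1 ≤ -1 by omega)
      exact ⟨0, 0, fun p _ h2 => by rw [hat_zero (by grind)]; simp⟩
  · subst hk
    refine ⟨fun y => rp y - rp (y - 1), fun x => rp (x - 2) - rp (x - 1), fun p h1 h2 => ?_⟩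
    rw [hat_u0 (by simpa using h1) (by simpa using h2)]; ring
  · have : (1:ℝ) ≤ k := by exact_mod_cast hk
    exact ⟨0, 0, fun p h1 _ => by rw [hat_zero (by grind)]; simp⟩

lemma allGood_hat {h : ℝ} (hh : 0 ≤ h) : AllGood h 1 1 1 hat := by
  refine ⟨?_, ?_, ?_, ?_⟩
  · unfold hat; fun_prop
  · exact Good.base hh (by simp [ly_apply, e2]) (by simp [ly_apply, e3])
      (by simp [lx_apply, e2]) (by simp [lu_apply, e3]) base_y
  · exact (Good.base hh (by simp [lx_apply, e1]) (by simp [lx_apply, e3])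
      (by simp [ly_apply, e1]) (by simp [lu_apply, e3]) base_x)
  · exact Good.base hh (by simp [lu_apply, e1]) (by simp [lu_apply, e2])
      (by simp [ly_apply, e1]) (by simp [lx_apply, e2]) base_u

lemma AllGood.step1 {h : ℝ} (hh : 0 ≤ h) {a b c : ℕ} {f : Pt → ℝ} (H : AllGood h a b c f) :
    AllGood h (a + 1) b c (Cv (-e1) f) :=
  ⟨Cv_cont _ H.cont, H.g1.stepE (by simp [ly_apply, e1]) H.cont,
    H.g2.stepU hh 1 (by simp [lx_apply, e1]) (by simp [lx_apply, e1]) H.cont,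
    H.g3.stepU hh 1 (by simp [lu_apply, e1]) (by simp [lu_apply, e1]) H.cont⟩

lemma AllGood.step2 {h : ℝ} (hh : 0 ≤ h) {a b c : ℕ} {f : Pt → ℝ} (H : AllGood h a b c f) :
    AllGood h a (b + 1) c (Cv (-e2) f) :=
  ⟨Cv_cont _ H.cont, H.g1.stepU hh 1 (by simp [ly_apply, e2]) (by simp [ly_apply, e2]) H.cont,
    H.g2.stepE (by simp [lx_apply, e2]) H.cont,
    H.g3.stepV hh (-1) (by simp [lu_apply, e2]) (by simp [lu_apply, e2]) H.cont⟩

lemma AllGood.step3 {h : ℝ} (hh : 0 ≤ h) {a b c : ℕ} {f : Pt → ℝ} (H : AllGood h a b c f) :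
    AllGood h a b (c + 1) (Cv (-e3) f) :=
  ⟨Cv_cont _ H.cont, H.g1.stepV hh 1 (by simp [ly_apply, e3]) (by simp [ly_apply, e3]) H.cont,
    H.g2.stepV hh 1 (by simp [lx_apply, e3]) (by simp [lx_apply, e3]) H.cont,
    H.g3.stepE (by simp [lu_apply, e3]) H.cont⟩

lemma box111 : boxN 1 1 1 = hat := by funext p; rw [boxN]

lemma box1 (a b c : ℕ) : boxN (a + 2) (b + 1) (c + 1) =
    Cv (-e1) (boxN (a + 1) (b + 1) (c + 1)) := by
  funext p; rw [boxN]; simp only [Cv, e1]; congr 1; funext t; congr 1; ext <;> simp; ring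
lemma box2 (b c : ℕ) : boxN 1 (b + 2) (c + 1) =
    Cv (-e2) (boxN 1 (b + 1) (c + 1)) := by
  funext p; rw [boxN]; simp only [Cv, e2]; congr 1; funext t; congr 1; ext <;> simp; ring
lemma box3 (c : ℕ) : boxN 1 1 (c + 2) =
    Cv (-e3) (boxN 1 1 (c + 1)) := by
  funext p; rw [boxN]; simp only [Cv, e3]; congr 1; funext t; congr 1; ext <;> simp <;> ring

lemma allGood_box {h : ℝ} (hh : 0 ≤ h) (a b c : ℕ) :
    AllGood h (a + 1) (b + 1) (c + 1) (boxN (a + 1) (b + 1) (c + 1)) := by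
  induction a with
  | zero =>
    induction b with
    | zero =>
      induction c with
      | zero => rw [zero_add, box111]; exact allGood_hat hh
      | succ c ih => rw [zero_add, box3] at *; exact ih.step3 hh
    | succ b ih => rw [zero_add, box2] at *; exact ih.step2 hh
  | succ a ih => rw [box1]; exact ih.step1 hh

lemma Good.sum {h : ℝ} {l : Pt →ₗ[ℝ] ℝ} {u v : Pt} {b c : ℕ} {f : Pt → ℝ}
    (H : Good h l u v b c f) (hl : ∀ w : ℤ × ℤ, ∃ z : ℤ, l ((w.1:ℝ), (w.2:ℝ)) = z)
    (C : (ℤ × ℤ) →₀ ℝ) :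
    Good h l u v b c
      (fun p => C.sum fun w a => a * f (p.1 - (w.1 : ℝ), p.2 - (w.2 : ℝ))) := by
  have : (fun p => C.sum fun w a => a * f (p.1 - (w.1 : ℝ), p.2 - (w.2 : ℝ))) =
      ∑ w ∈ C.support, C w • E (-((w.1:ℝ), (w.2:ℝ))) f := by
    funext p
    simp only [Finsupp.sum, Finset.sum_apply, Pi.smul_apply, E_apply, smul_eq_mul, sub_eq_add_neg]
    rfl
  rw [this]
  intro k p h1 h2
  simp only [map_sum, map_smul, Finset.sum_apply, Pi.smul_apply, smul_eq_mul]
  refine Finset.sum_eq_zero fun w _ => ?_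
  rw [← Module.End.mul_apply, ← Module.End.mul_apply, mul_assoc,
    ← ((E_comm _ _).pow_right c).eq, ← mul_assoc, ← ((E_comm _ _).pow_right b).eq, mul_assoc,
    Module.End.mul_apply, E_apply, Module.End.mul_apply]
  obtain ⟨z, hz⟩ := hl w
  rw [H (k - z), mul_zero]
  · rw [map_add, map_neg, hz]; push_cast; linarith
  · rw [map_add, map_neg, hz]; push_cast; linarith

/-- nested squares around a point -/
def U (p0 : Pt) (h : ℝ) (k : ℕ) : Set Pt :=
  {p | |p.1 - p0.1| ≤ 1 / 12 - k * h ∧ |p.2 - p0.2| ≤ 1 / 12 - k * h}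

lemma U_shift {p0 : Pt} {h : ℝ} {k : ℕ} {p v : Pt} (hv1 : |v.1| ≤ h) (hv2 : |v.2| ≤ h)
    (hp : p ∈ U p0 h (k + 1)) : p + v ∈ U p0 h k := by
  simp only [U, Set.mem_ofPred_eq, Prod.fst_add, Prod.snd_add, abs_le] at *
  push_cast at hp
  refine ⟨⟨?_, ?_⟩, ?_, ?_⟩ <;> linarith

lemma U_mono {p0 : Pt} {h : ℝ} (hh : 0 ≤ h) {k m : ℕ} (hkm : k ≤ m) : U p0 h m ⊆ U p0 h k := by
  intro p hp
  have : (k:ℝ) * h ≤ m * h := by gcongr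
  exact ⟨by linarith [hp.1], by linarith [hp.2]⟩

lemma D_zero {p0 : Pt} {h : ℝ} (hh : 0 ≤ h) {k : ℕ} {f : Pt → ℝ} {v : Pt}
    (hv1 : |v.1| ≤ h) (hv2 : |v.2| ≤ h) (n : ℕ)
    (hf : ∀ p ∈ U p0 h k, f p = 0) : ∀ p ∈ U p0 h (k + n), (D v ^ n) f p = 0 := by
  induction n with
  | zero => simpa using hf
  | succ n ih =>
    intro p hp
    rw [pow_succ', Module.End.mul_apply, D_apply, ih _ (U_shift hv1 hv2 hp),
      ih p (U_mono hh (by omega) hp), sub_zero]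

def W (h : ℝ) (a b c : ℕ) (g : Pt → ℝ) : Pt → ℝ :=
  (D (h • e1) ^ a * D (h • e2) ^ b * D (h • e3) ^ c) g

lemma rel (h : ℝ) (f : Pt → ℝ) (p : Pt) :
    D (h • e3) f p = D (h • e1) f p + D (h • e2) f (p + h • e1) := by
  simp only [D_apply]
  rw [show p + h • e3 = p + h • e1 + h • e2 by ext <;> simp [e1, e2, e3]]
  ring

lemma W_zero {p0 : Pt} {h : ℝ} (hh : 0 ≤ h) {k : ℕ} {f : Pt → ℝ} (a b c : ℕ)
    (hf : ∀ p ∈ U p0 h k, f p = 0) : ∀ p ∈ U p0 h (k + (a + b + c)), W h a b c f p = 0 := by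
  have h0 : |h| ≤ h := by rw [abs_of_nonneg hh]
  have A := D_zero hh (v := h • e3) (by simpa [e3] using h0) (by simpa [e3] using h0) c hf
  have B := D_zero hh (v := h • e2) (by simpa [e2] using hh) (by simpa [e2] using h0) b A
  have C := D_zero hh (v := h • e1) (by simpa [e1] using h0) (by simpa [e1] using hh) a B
  intro p hp
  exact C p (U_mono hh (by omega) hp)

lemma W_rel {h : ℝ} (a b c : ℕ) (g : Pt → ℝ) (p : Pt) :
    W h a b (c + 1) g p = W h (a + 1) b c g p + W h a (b + 1) c g (p + h • e1) := by
  have c12 := D_comm (h • e1) (h • e2)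
  have c13 := D_comm (h • e1) (h • e3)
  have c23 := D_comm (h • e2) (h • e3)
  have A : W h a b (c + 1) g = D (h • e3) (W h a b c g) := by
    unfold W
    rw [← Module.End.mul_apply]; congr 1
    rw [pow_succ, ← mul_assoc]
    exact (((c13.pow_left a).mul_left (c23.pow_left b)).mul_left
      ((Commute.refl (D (h • e3))).pow_left c)).eq
  have B : W h (a + 1) b c g = D (h • e1) (W h a b c g) := by
    unfold W
    rw [← Module.End.mul_apply]; congr 1
    rw [pow_succ']; simp only [mul_assoc]
  have C : W h a (b + 1) c g = D (h • e2) (W h a b c g) := by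
    unfold W
    rw [← Module.End.mul_apply]; congr 1
    rw [pow_succ', ← mul_assoc, (c12.pow_left a).eq]; simp only [mul_assoc]
  rw [A, B, C, rel]

lemma W_add (h : ℝ) (a b c a' b' c' : ℕ) (g : Pt → ℝ) :
    W h (a + a') (b + b') (c + c') g = W h a b c (W h a' b' c' g) := by
  have c12 := D_comm (h • e1) (h • e2)
  have c13 := D_comm (h • e1) (h • e3)
  have c23 := D_comm (h • e2) (h • e3)
  unfold W
  rw [← Module.End.mul_apply]; congr 1
  simp only [pow_add]
  generalize hx : D (h • e1) ^ a = x
  have hxy : Commute (D (h • e2) ^ b) (D (h • e1) ^ a') := (c12.symm).pow_pow _ _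
  have hxz : Commute (D (h • e3) ^ c) (D (h • e1) ^ a') := (c13.symm).pow_pow _ _
  have hyz : Commute (D (h • e3) ^ c) (D (h • e2) ^ b') := (c23.symm).pow_pow _ _
  generalize D (h • e2) ^ b = y at *
  generalize D (h • e3) ^ c = z at *
  generalize D (h • e1) ^ a' = x' at *
  generalize D (h • e2) ^ b' = y' at *
  generalize D (h • e3) ^ c' = z' at *
  calc x * x' * (y * y') * (z * z') = x * (x' * y) * (y' * z) * z' := by simp only [mul_assoc]
    _ = x * (y * x') * (z * y') * z' := by rw [hxy.eq, hyz.eq]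
    _ = x * y * (x' * z) * y' * z' := by simp only [mul_assoc]
    _ = x * y * (z * x') * y' * z' := by rw [hxz.eq]
    _ = _ := by simp only [mul_assoc]

section elim
variable {p0 : Pt} {h : ℝ} {n1 n2 n3 : ℕ} {g : Pt → ℝ}

structure Hyp (p0 : Pt) (h : ℝ) (n1 n2 n3 : ℕ) (g : Pt → ℝ) : Prop where
  hh : 0 ≤ h
  h12 : ∀ p ∈ U p0 h 0, W h n1 n2 0 g p = 0
  h13 : ∀ p ∈ U p0 h 0, W h n1 0 n3 g p = 0
  h23 : ∀ p ∈ U p0 h 0, W h 0 n2 n3 g p = 0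

lemma Hyp.two (H : Hyp p0 h n1 n2 n3 g) {a b c : ℕ}
    (hab : (n1 ≤ a ∧ n2 ≤ b) ∨ (n1 ≤ a ∧ n3 ≤ c) ∨ (n2 ≤ b ∧ n3 ≤ c)) :
    ∀ p ∈ U p0 h (a + b + c), W h a b c g p = 0 := by
  intro p hp
  rcases hab with ⟨h1, h2⟩ | ⟨h1, h2⟩ | ⟨h1, h2⟩
  · obtain ⟨x, rfl⟩ := Nat.exists_eq_add_of_le' h1
    obtain ⟨y, rfl⟩ := Nat.exists_eq_add_of_le' h2
    rw [show c = c + 0 from rfl, W_add]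
    exact W_zero H.hh _ _ _ H.h12 p (U_mono H.hh (by omega) hp)
  · obtain ⟨x, rfl⟩ := Nat.exists_eq_add_of_le' h1
    obtain ⟨y, rfl⟩ := Nat.exists_eq_add_of_le' h2
    rw [show b = b + 0 from rfl, W_add]
    exact W_zero H.hh _ _ _ H.h13 p (U_mono H.hh (by omega) hp)
  · obtain ⟨x, rfl⟩ := Nat.exists_eq_add_of_le' h1
    obtain ⟨y, rfl⟩ := Nat.exists_eq_add_of_le' h2
    rw [show a = a + 0 from rfl, W_add]
    exact W_zero H.hh _ _ _ H.h23 p (U_mono H.hh (by omega) hp)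

lemma Hyp.L1 (H : Hyp p0 h n1 n2 n3 g) (j : ℕ) : ∀ a b c : ℕ, n1 ≤ a →
    n1 + n2 + n3 ≤ a + b + c + 1 → (n2 - b) + (n3 - c) ≤ j →
    ∀ p ∈ U p0 h (a + b + c + j), W h a b c g p = 0 := by
  induction j with
  | zero =>
    intro a b c h1 h2 h3 p hp
    exact H.two (by omega) p hp
  | succ j ih =>
    intro a b c h1 h2 h3 p hp
    by_cases h4 : (n1 ≤ a ∧ n2 ≤ b) ∨ (n1 ≤ a ∧ n3 ≤ c) ∨ (n2 ≤ b ∧ n3 ≤ c)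
    · exact H.two h4 p (U_mono H.hh (by omega) hp)
    · obtain ⟨a, rfl⟩ : ∃ a', a = a' + 1 := ⟨a - 1, by omega⟩
      have := W_rel (h := h) a b c g p
      rw [ih a b (c + 1) (by omega) (by omega) (by omega) p (U_mono H.hh (by omega) hp),
        ih a (b + 1) c (by omega) (by omega) (by omega) (p + h • e1) ?_] at this
      · linarith
      · refine U_shift (by simp [e1, abs_of_nonneg H.hh]) (by simpa [e1] using H.hh)
          (U_mono H.hh ?_ hp)
        omega

lemma Hyp.L2 (H : Hyp p0 h n1 n2 n3 g) (j : ℕ) : ∀ a b c : ℕ, n2 ≤ b →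
    n1 + n2 + n3 ≤ a + b + c + 1 → (n1 - a) + (n3 - c) ≤ j →
    ∀ p ∈ U p0 h (a + b + c + j), W h a b c g p = 0 := by
  induction j with
  | zero =>
    intro a b c h1 h2 h3 p hp
    exact H.two (by omega) p hp
  | succ j ih =>
    intro a b c h1 h2 h3 p hp
    by_cases h4 : (n1 ≤ a ∧ n2 ≤ b) ∨ (n1 ≤ a ∧ n3 ≤ c) ∨ (n2 ≤ b ∧ n3 ≤ c)
    · exact H.two h4 p (U_mono H.hh (by omega) hp)
    · obtain ⟨b, rfl⟩ : ∃ b', b = b' + 1 := ⟨b - 1, by omega⟩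
      have hs : p + (-(h • e1)) ∈ U p0 h (a + b + c + 1 + j) := by
        refine U_shift (by simp [e1, abs_of_nonneg H.hh]) (by simpa [e1] using H.hh)
          (U_mono H.hh ?_ hp)
        omega
      have := W_rel (h := h) a b c g (p + (-(h • e1)))
      rw [ih a b (c + 1) (by omega) (by omega) (by omega) _ (U_mono H.hh (by omega) hs),
        ih (a + 1) b c (by omega) (by omega) (by omega) _ (U_mono H.hh (by omega) hs),
        neg_add_cancel_right] at this
      linarith

lemma Hyp.main (H : Hyp p0 h n1 n2 n3 g) (a b : ℕ) (hab : n1 + n2 + n3 ≤ a + b + 1)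
    (hn : 1 ≤ n3) :
    ∀ p ∈ U p0 h (a + b + (n1 + n2 + n3)), W h a b 0 g p = 0 := by
  intro p hp
  by_cases h1 : n1 ≤ a
  · exact H.L1 _ a b 0 h1 (by omega) (by omega) p hp
  · exact H.L2 _ a b 0 (by omega) (by omega) (by omega) p hp

end elim

lemma core {n1 n2 n3 : ℕ} (h1 : 1 ≤ n1) (h2 : 1 ≤ n2) (h3 : 1 ≤ n3) {T : Tri} {q : BPoly}
    (hq : q ∈ VSpace n1 n2 n3 T) (M : ℕ) (hM : n1 + n2 + n3 ≤ M) :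
    ∃ h : ℝ, 0 < h ∧ ∃ p0 : Pt, ∀ a b c : ℕ, a + b + c + (n1 + n2 + n3) ≤ M →
      (((n1 ≤ a ∧ n2 ≤ b) ∨ (n1 ≤ a ∧ n3 ≤ c) ∨ (n2 ≤ b ∧ n3 ≤ c)) ∨
        (c = 0 ∧ n1 + n2 + n3 ≤ a + b + 1)) → W h a b c (evalP q) p0 = 0 := by
  obtain ⟨C, -, hC⟩ := hq
  obtain ⟨h, hh, hMh⟩ : ∃ h : ℝ, 0 < h ∧ M * h ≤ 1 / 12 := by
    refine ⟨1 / (12 * (M + 1)), by positivity, ?_⟩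
    rw [mul_one_div, div_le_div_iff₀ (by positivity) (by norm_num)]
    linarith
  set S : Pt → ℝ := fun p => C.sum fun w a => a * boxN n1 n2 n3 (p.1 - (w.1 : ℝ), p.2 - (w.2 : ℝ))
    with hS
  obtain ⟨m1, rfl⟩ := Nat.exists_eq_add_of_le' h1
  obtain ⟨m2, rfl⟩ := Nat.exists_eq_add_of_le' h2
  obtain ⟨m3, rfl⟩ := Nat.exists_eq_add_of_le' h3
  have B := allGood_box hh.le m1 m2 m3
  have G1 := B.g1.sum (fun w => ⟨w.2, rfl⟩) C
  have G2 := B.g2.sum (fun w => ⟨w.1, rfl⟩) C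
  have G3 := B.g3.sum (fun w => ⟨w.1 - w.2, by rw [lu_apply]; push_cast; rfl⟩) C
  rw [← hS] at G1 G2 G3
  have hM' : ((m1 + 1 : ℕ) : ℝ) + (m2 + 1 : ℕ) + (m3 + 1 : ℕ) ≤ M := by exact_mod_cast hM
  have q1 : (0:ℝ) ≤ (m1 + 1 : ℕ) * h := by positivity
  have q2 : (0:ℝ) ≤ (m2 + 1 : ℕ) * h := by positivity
  have q3 : (0:ℝ) ≤ (m3 + 1 : ℕ) * h := by positivity
  have hM'' := (mul_le_mul_of_nonneg_right hM' hh.le).trans hMh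
  have s1 : (((m2 + 1 : ℕ) : ℝ) + (m3 + 1 : ℕ)) * h ≤ 1 / 12 := by linarith
  have s2 : (((m1 + 1 : ℕ) : ℝ) + (m3 + 1 : ℕ)) * h ≤ 1 / 12 := by linarith
  have s3 : (((m1 + 1 : ℕ) : ℝ) + (m2 + 1 : ℕ)) * h ≤ 1 / 12 := by linarith
  obtain ⟨p0, k1, k2, k3, hp0⟩ : ∃ (p0 : Pt) (k1 k2 k3 : ℤ), ∀ p ∈ U p0 h 0, p ∈ T.toSet ∧
      (k1 + 1 / 12 ≤ ly p ∧ ly p ≤ k1 + 1 - 1 / 12) ∧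
      (k2 + 1 / 12 ≤ lx p ∧ lx p ≤ k2 + 1 - 1 / 12) ∧
      ((k3:ℝ) + 1 / 12 ≤ lu p ∧ lu p ≤ k3 + 1 - 1 / 12) := by
    obtain ⟨⟨v1, v2⟩, up⟩ := T
    cases up
    · refine ⟨(v1 + 2 / 3, v2 + 1 / 3), v2, v1, v1 - v2, fun p hp => ?_⟩
      simp only [U, Set.mem_ofPred_eq, abs_le, Tri.toSet, lx_apply, ly_apply, lu_apply] at *
      push_cast at *
      norm_num at *
      refine ⟨⟨?_, ?_, ?_⟩, ⟨?_, ?_⟩, ⟨?_, ?_⟩, ?_, ?_⟩ <;> linarith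
    · refine ⟨(v1 + 1 / 3, v2 + 2 / 3), v2, v1, v1 - v2 - 1, fun p hp => ?_⟩
      simp only [U, Set.mem_ofPred_eq, abs_le, Tri.toSet, lx_apply, ly_apply, lu_apply] at *
      push_cast at *
      norm_num at *
      refine ⟨⟨?_, ?_, ?_⟩, ⟨?_, ?_⟩, ⟨?_, ?_⟩, ?_, ?_⟩ <;> linarith
  have H : Hyp p0 h (m1 + 1) (m2 + 1) (m3 + 1) S := by
    refine ⟨hh.le, fun p hp => ?_, fun p hp => ?_, fun p hp => ?_⟩
    · obtain ⟨-, -, -, z1, z2⟩ := hp0 p hp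
      have := G3 k3 p (by linarith) (by linarith)
      simpa [W] using this
    · obtain ⟨-, -, ⟨z1, z2⟩, -⟩ := hp0 p hp
      have := G2 k2 p (by linarith) (by linarith)
      simpa [W] using this
    · obtain ⟨-, ⟨z1, z2⟩, -⟩ := hp0 p hp
      have := G1 k1 p (by linarith) (by linarith)
      simpa [W] using this
  refine ⟨h, hh, p0, fun a b c habc hab => ?_⟩
  have hpM : p0 ∈ U p0 h M := by simp [U]; linarith
  have hloc := W_zero hh.le (p0 := p0) (k := 0) (f := evalP q - S) a b c (fun p hp => by
    have := hC p (hp0 p hp).1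
    simp only [Pi.sub_apply, this, hS, trBox, sub_self]) p0 (U_mono hh.le (by omega) hpM)
  have hS0 : W h a b c S p0 = 0 := by
    rcases hab with hab | ⟨rfl, hab⟩
    · exact H.two hab p0 (U_mono hh.le (by omega) hpM)
    · exact H.main a b hab h3 p0 (U_mono hh.le (by omega) hpM)
  unfold W at *
  rw [map_sub, Pi.sub_apply, hS0, sub_zero] at hloc
  exact hloc

lemma fwd_scale (h : ℝ) (n : ℕ) (f : ℝ → ℝ) (x : ℝ) :
    (fwdDiff h)^[n] f (h * x) = (fwdDiff 1)^[n] (fun r => f (h * r)) x := by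
  rw [fwdDiff_iter_eq_sum_shift, fwdDiff_iter_eq_sum_shift]
  refine Finset.sum_congr rfl fun k _ => ?_
  congr 2
  simp; ring

lemma fwd_pow {h : ℝ} (hh : h ≠ 0) (n j : ℕ) (x : ℝ) :
    (fwdDiff h)^[n] (fun r : ℝ => r ^ j) x = h ^ j * (fwdDiff 1)^[n] (fun r : ℝ => r ^ j) (x / h) := by
  have := fwd_scale h n (fun r : ℝ => r ^ j) (x / h)
  rw [mul_div_cancel₀ x hh] at this
  rw [this]
  have h2 : (fun r : ℝ => (h * r) ^ j) = (h ^ j) • (fun r : ℝ => r ^ j) := by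
    funext r; simp [mul_pow]
  rw [h2, fwdDiff_iter_const_smul]
  simp

lemma fwd_lt {h : ℝ} (hh : h ≠ 0) {n j : ℕ} (hj : j < n) (x : ℝ) :
    (fwdDiff h)^[n] (fun r : ℝ => r ^ j) x = 0 := by
  rw [fwd_pow hh, fwdDiff_iter_pow_eq_zero_of_lt hj]; simp

lemma fwd_ne {h : ℝ} (hh : h ≠ 0) (n : ℕ) (x : ℝ) :
    (fwdDiff h)^[n] (fun r : ℝ => r ^ n) x ≠ 0 := by
  rw [fwd_pow hh, fwdDiff_iter_eq_factorial]
  simp [hh, Nat.factorial_ne_zero]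

lemma Dpow1 (h : ℝ) (n : ℕ) (f g : ℝ → ℝ) :
    (D (h, 0) ^ n) (fun p => f p.1 * g p.2) = fun p => (fwdDiff h)^[n] f p.1 * g p.2 := by
  induction n with
  | zero => simp
  | succ n ih =>
    rw [pow_succ', Module.End.mul_apply, ih, Function.iterate_succ_apply']
    funext p
    simp [D_apply, fwdDiff]; ring

lemma Dpow2 (h : ℝ) (n : ℕ) (f g : ℝ → ℝ) :
    (D (0, h) ^ n) (fun p => f p.1 * g p.2) = fun p => f p.1 * (fwdDiff h)^[n] g p.2 := by
  induction n with
  | zero => simp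
  | succ n ih =>
    rw [pow_succ', Module.End.mul_apply, ih, Function.iterate_succ_apply']
    funext p
    simp [D_apply, fwdDiff]; ring

lemma DpowX (v : Pt) (n : ℕ) (f : ℝ → ℝ) :
    (D v ^ n) (fun p => f p.1) = fun p => (fwdDiff v.1)^[n] f p.1 := by
  induction n with
  | zero => simp
  | succ n ih =>
    rw [pow_succ', Module.End.mul_apply, ih, Function.iterate_succ_apply']
    funext p
    simp [D_apply, fwdDiff]

lemma DpowY (v : Pt) (n : ℕ) (f : ℝ → ℝ) :
    (D v ^ n) (fun p => f p.2) = fun p => (fwdDiff v.2)^[n] f p.2 := by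
  induction n with
  | zero => simp
  | succ n ih =>
    rw [pow_succ', Module.End.mul_apply, ih, Function.iterate_succ_apply']
    funext p
    simp [D_apply, fwdDiff]

lemma W12 (h : ℝ) (a b : ℕ) (f g : ℝ → ℝ) (p : Pt) :
    W h a b 0 (fun p => f p.1 * g p.2) p = (fwdDiff h)^[a] f p.1 * (fwdDiff h)^[b] g p.2 := by
  have k1 : h • e1 = (h, 0) := by simp [e1]
  have k2 : h • e2 = (0, h) := by simp [e2]
  unfold W
  rw [pow_zero, mul_one, Module.End.mul_apply, k1, k2, Dpow2 h, Dpow1 h]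

lemma W13 (h : ℝ) (a c : ℕ) (f : ℝ → ℝ) (p : Pt) :
    W h a 0 c (fun p => f p.1) p = (fwdDiff h)^[a + c] f p.1 := by
  have k1 : (h • e1).1 = h := by simp [e1]
  have k2 : (h • e3).1 = h := by simp [e3]
  unfold W
  rw [pow_zero, mul_one, Module.End.mul_apply, DpowX, DpowX, k1, k2, Function.iterate_add_apply]

lemma W23 (h : ℝ) (b c : ℕ) (f : ℝ → ℝ) (p : Pt) :
    W h 0 b c (fun p => f p.2) p = (fwdDiff h)^[b + c] f p.2 := by
  have k1 : (h • e2).2 = h := by simp [e2]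
  have k2 : (h • e3).2 = h := by simp [e3]
  unfold W
  rw [pow_zero, one_mul, Module.End.mul_apply, DpowY, DpowY, k1, k2, Function.iterate_add_apply]

lemma evalP_eq (q : BPoly) : evalP q =
    ∑ d ∈ q.support, q.coeff d • (fun p : Pt => p.1 ^ d 0 * p.2 ^ d 1) := by
  funext p
  simp [evalP, MvPolynomial.eval_eq', Fin.prod_univ_two]

lemma sum_two (d : Fin 2 →₀ ℕ) : (d.sum fun _ e => e) = d 0 + d 1 := by
  rw [Finsupp.sum_fintype _ _ (by simp), Fin.sum_univ_two]

lemma deg_le {n1 n2 n3 : ℕ} (h1 : 1 ≤ n1) (h2 : 1 ≤ n2) (h3 : 1 ≤ n3) {T : Tri} {q : BPoly}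
    (hq : q ∈ VSpace n1 n2 n3 T) : q.totalDegree ≤ n1 + n2 + n3 - 2 := by
  by_contra! hlt
  have hne : q.support.Nonempty := by
    rw [MvPolynomial.support_nonempty]; rintro rfl; simp at hlt
  obtain ⟨d, hd, hdeg⟩ := Finset.exists_mem_eq_sup q.support hne
    (fun s : Fin 2 →₀ ℕ => s.sum fun _ e => e)
  change q.totalDegree = _ at hdeg
  rw [sum_two] at hdeg
  obtain ⟨h, hh, p0, H⟩ := core h1 h2 h3 hq (d 0 + d 1 + (n1 + n2 + n3)) (by omega)
  have := H (d 0) (d 1) 0 (by omega) (Or.inr ⟨rfl, by omega⟩)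
  rw [evalP_eq] at this
  have key : W h (d 0) (d 1) 0
      (∑ d ∈ q.support, q.coeff d • (fun p : Pt => p.1 ^ d 0 * p.2 ^ d 1)) p0 =
      ∑ d' ∈ q.support, q.coeff d' *
        W h (d 0) (d 1) 0 (fun p : Pt => p.1 ^ d' 0 * p.2 ^ d' 1) p0 := by
    unfold W
    simp only [map_sum, map_smul, Finset.sum_apply, Pi.smul_apply, smul_eq_mul]
  rw [key, Finset.sum_eq_single_of_mem d hd] at this
  · rw [W12 h (d 0) (d 1) (fun r => r ^ d 0) (fun r => r ^ d 1)] at this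
    have hc := MvPolynomial.mem_support_iff.mp hd
    exact mul_ne_zero hc (mul_ne_zero (fwd_ne hh.ne' _ _) (fwd_ne hh.ne' _ _)) this
  · intro d' hd' hne
    rw [W12 h (d 0) (d 1) (fun r => r ^ d' 0) (fun r => r ^ d' 1)]
    have hle := MvPolynomial.le_totalDegree hd'
    rw [sum_two, hdeg] at hle
    have : d' 0 < d 0 ∨ d' 1 < d 1 := by
      by_contra! hcon
      apply hne
      ext i
      fin_cases i <;> simp <;> omega
    rcases this with h' | h'
    · rw [fwd_lt hh.ne' h']; simp
    · rw [fwd_lt hh.ne' h']; simp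

lemma proper {n1 n2 n3 : ℕ} (h1 : 1 ≤ n1) (h2 : 1 ≤ n2) (h3 : 1 ≤ n3)
    (hn : ¬(n1 = 1 ∧ n2 = 1 ∧ n3 = 1)) (T : Tri) :
    ∃ q : BPoly, q.totalDegree ≤ n1 + n2 + n3 - 2 ∧ q ∉ VSpace n1 n2 n3 T := by
  have hcase : 2 ≤ n1 ∨ 2 ≤ n2 ∨ 2 ≤ n3 := by omega
  rcases hcase with hc | hc | hc
  · refine ⟨X 1 ^ (n2 + n3), by rw [totalDegree_X_pow]; omega, fun hq => ?_⟩
    obtain ⟨h, hh, p0, H⟩ := core h1 h2 h3 hq (0 + n2 + n3 + (n1 + n2 + n3)) (by omega)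
    have := H 0 n2 n3 (by omega) (by omega)
    have e : evalP (X 1 ^ (n2 + n3)) = fun p => p.2 ^ (n2 + n3) := by
      funext p; simp [evalP]
    rw [e, W23 h _ _ (fun r => r ^ (n2 + n3))] at this
    exact fwd_ne hh.ne' _ _ this
  · refine ⟨X 0 ^ (n1 + n3), by rw [totalDegree_X_pow]; omega, fun hq => ?_⟩
    obtain ⟨h, hh, p0, H⟩ := core h1 h2 h3 hq (n1 + 0 + n3 + (n1 + n2 + n3)) (by omega)
    have := H n1 0 n3 (by omega) (by omega)
    have e : evalP (X 0 ^ (n1 + n3)) = fun p => p.1 ^ (n1 + n3) := by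
      funext p; simp [evalP]
    rw [e, W13 h _ _ (fun r => r ^ (n1 + n3))] at this
    exact fwd_ne hh.ne' _ _ this
  · refine ⟨X 0 ^ n1 * X 1 ^ n2, ?_, fun hq => ?_⟩
    · refine (totalDegree_mul _ _).trans ?_
      rw [totalDegree_X_pow, totalDegree_X_pow]; omega
    obtain ⟨h, hh, p0, H⟩ := core h1 h2 h3 hq (n1 + n2 + 0 + (n1 + n2 + n3)) (by omega)
    have := H n1 n2 0 (by omega) (by omega)
    have e : evalP (X 0 ^ n1 * X 1 ^ n2) = fun p => p.1 ^ n1 * p.2 ^ n2 := by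
      funext p; simp [evalP]
    rw [e, W12 h _ _ (fun r => r ^ n1) (fun r => r ^ n2)] at this
    exact mul_ne_zero (fwd_ne hh.ne' _ _) (fwd_ne hh.ne' _ _) this

lemma affine {q : BPoly} (hq : q.totalDegree ≤ 1) :
    ∃ a b c : ℝ, ∀ p, evalP q p = a + b * p.1 + c * p.2 := by
  refine ⟨q.coeff 0, q.coeff (Finsupp.single 0 1), q.coeff (Finsupp.single 1 1), fun p => ?_⟩
  have hsub : q.support ⊆ {0, Finsupp.single 0 1, Finsupp.single 1 1} := by
    intro d hd
    have := (MvPolynomial.le_totalDegree hd).trans hq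
    rw [sum_two] at this
    have : (d 0 = 0 ∧ d 1 = 0) ∨ (d 0 = 1 ∧ d 1 = 0) ∨ (d 0 = 0 ∧ d 1 = 1) := by omega
    simp only [Finset.mem_insert, Finset.mem_singleton]
    rcases this with h | h | h
    · left; ext i; fin_cases i <;> simp [h]
    · right; left; ext i; fin_cases i <;> simp [h]
    · right; right; ext i; fin_cases i <;> simp [h]
  rw [evalP_eq, Finset.sum_subset hsub (by
    intro d _ hd; rw [MvPolynomial.notMem_support_iff.mp hd, zero_smul])]
  rw [Finset.sum_insert, Finset.sum_insert, Finset.sum_singleton]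
  · simp; ring
  · simp only [Finset.mem_singleton]
    intro h; have := DFunLike.congr_fun h 0; simp at this
  · simp only [Finset.mem_insert, Finset.mem_singleton]
    rintro (h | h)
    · have := DFunLike.congr_fun h 0; simp at this
    · have := DFunLike.congr_fun h 1; simp at this

lemma rep3 {T : Tri} {q : BPoly} (w1 w2 w3 : ℤ × ℤ) (b1 b2 b3 : ℝ)
    (k1 : w1 ∈ activeSet 1 1 1 T) (k2 : w2 ∈ activeSet 1 1 1 T) (k3 : w3 ∈ activeSet 1 1 1 T)
    (H : ∀ p ∈ T.toSet, evalP q p = b1 * trBox 1 1 1 w1 p + b2 * trBox 1 1 1 w2 p +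
      b3 * trBox 1 1 1 w3 p) : q ∈ VSpace 1 1 1 T := by
  refine ⟨Finsupp.single w1 b1 + Finsupp.single w2 b2 + Finsupp.single w3 b3, ?_, ?_⟩
  · intro w hw
    by_contra hcon
    have a1 : w ≠ w1 := by rintro rfl; exact hcon k1
    have a2 : w ≠ w2 := by rintro rfl; exact hcon k2
    have a3 : w ≠ w3 := by rintro rfl; exact hcon k3
    simp [Finsupp.single_apply, a1.symm, a2.symm, a3.symm] at hw
  · intro p hp
    rw [H p hp, Finsupp.sum_add_index', Finsupp.sum_add_index', Finsupp.sum_single_index,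
      Finsupp.sum_single_index, Finsupp.sum_single_index]
    all_goals (try simp)
    all_goals (try (intros; ring))

lemma hatv1 {x y : ℝ} (h0 : 0 < y) (h1 : y < x) (h2 : x < 1) : hat (x + 1, y + 1) = 1 - x := by
  unfold hat; grind
lemma hatv2 {x y : ℝ} (h0 : 0 < y) (h1 : y < x) (h2 : x < 1) : hat (x, y + 1) = x - y := by
  unfold hat; grind
lemma hatv3 {x y : ℝ} (h0 : 0 < y) (h1 : y < x) (h2 : x < 1) : hat (x, y) = y := by
  unfold hat; grind

lemma ge111 (T : Tri) {q : BPoly} (hq : q.totalDegree ≤ 1) : q ∈ VSpace 1 1 1 T := by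
  obtain ⟨a, b, c, H⟩ := affine hq
  obtain ⟨⟨v1, v2⟩, up⟩ := T
  cases up
  · have F1 : ∀ p ∈ Tri.toSet ⟨(v1, v2), false⟩, trBox 1 1 1 (v1 - 1, v2 - 1) p = 1 - (p.1 - v1) := by
      intro p hp
      simp only [Tri.toSet, Set.mem_ofPred_eq, Bool.false_eq_true, if_false] at hp
      rw [← hatv1 (y := p.2 - v2) (by linarith) (by linarith) (by linarith), trBox, box111]
      push_cast; congr 1; ext <;> simp <;> ring
    have F2 : ∀ p ∈ Tri.toSet ⟨(v1, v2), false⟩, trBox 1 1 1 (v1, v2 - 1) p =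
        (p.1 - v1) - (p.2 - v2) := by
      intro p hp
      simp only [Tri.toSet, Set.mem_ofPred_eq, Bool.false_eq_true, if_false] at hp
      rw [← hatv2 (by linarith) (by linarith) (by linarith), trBox, box111]
      push_cast; congr 1; ext <;> simp <;> ring
    have F3 : ∀ p ∈ Tri.toSet ⟨(v1, v2), false⟩, trBox 1 1 1 (v1, v2) p = p.2 - v2 := by
      intro p hp
      simp only [Tri.toSet, Set.mem_ofPred_eq, Bool.false_eq_true, if_false] at hp
      rw [trBox, box111]
      exact hatv3 (by linarith) (by linarith) (by linarith)
    have hm : ((v1:ℝ) + 2 / 3, (v2:ℝ) + 1 / 3) ∈ Tri.toSet ⟨(v1, v2), false⟩ := by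
      simp only [Tri.toSet, Set.mem_ofPred_eq, Bool.false_eq_true, if_false]
      refine ⟨?_, ?_, ?_⟩ <;> linarith
    refine rep3 (v1 - 1, v2 - 1) (v1, v2 - 1) (v1, v2) (a + b * v1 + c * v2)
      (a + b * (v1 + 1) + c * v2) (a + b * (v1 + 1) + c * (v2 + 1)) ?_ ?_ ?_ ?_
    · intro hz; have := hz _ hm; rw [F1 _ hm] at this; norm_num at this
    · intro hz; have := hz _ hm; rw [F2 _ hm] at this; norm_num at this
    · intro hz; have := hz _ hm; rw [F3 _ hm] at this; norm_num at this
    · intro p hp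
      rw [F1 p hp, F2 p hp, F3 p hp, H]; ring
  · have F1 : ∀ p ∈ Tri.toSet ⟨(v1, v2), true⟩, trBox 1 1 1 (v1 - 1, v2 - 1) p = 1 - (p.2 - v2) := by
      intro p hp
      simp only [Tri.toSet, Set.mem_ofPred_eq, if_true] at hp
      rw [← hatv1 (y := p.1 - v1) (by linarith) (by linarith) (by linarith), hat_swap, trBox, box111]
      push_cast; congr 1; ext <;> simp <;> ring
    have F2 : ∀ p ∈ Tri.toSet ⟨(v1, v2), true⟩, trBox 1 1 1 (v1 - 1, v2) p =
        (p.2 - v2) - (p.1 - v1) := by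
      intro p hp
      simp only [Tri.toSet, Set.mem_ofPred_eq, if_true] at hp
      rw [← hatv2 (by linarith) (by linarith) (by linarith), hat_swap, trBox, box111]
      push_cast; congr 1; ext <;> simp <;> ring
    have F3 : ∀ p ∈ Tri.toSet ⟨(v1, v2), true⟩, trBox 1 1 1 (v1, v2) p = p.1 - v1 := by
      intro p hp
      simp only [Tri.toSet, Set.mem_ofPred_eq, if_true] at hp
      rw [trBox, box111, hat_swap]
      exact hatv3 (by linarith) (by linarith) (by linarith)
    have hm : ((v1:ℝ) + 1 / 3, (v2:ℝ) + 2 / 3) ∈ Tri.toSet ⟨(v1, v2), true⟩ := by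
      simp only [Tri.toSet, Set.mem_ofPred_eq, if_true]
      refine ⟨?_, ?_, ?_⟩ <;> linarith
    refine rep3 (v1 - 1, v2 - 1) (v1 - 1, v2) (v1, v2) (a + b * v1 + c * v2)
      (a + b * v1 + c * (v2 + 1)) (a + b * (v1 + 1) + c * (v2 + 1)) ?_ ?_ ?_ ?_
    · intro hz; have := hz _ hm; rw [F1 _ hm] at this; norm_num at this
    · intro hz; have := hz _ hm; rw [F2 _ hm] at this; norm_num at this
    · intro hz; have := hz _ hm; rw [F3 _ hm] at this; norm_num at this
    · intro p hp
      rw [F1 p hp, F2 p hp, F3 p hp, H]; ring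

end BoxPf

/-- `V_{(1,1,1)} = P₁`, the affine polynomials; and for every
`n ≠ (1,1,1)` with all `nᵢ ≥ 1`, `V_n` is a proper subspace of
`P_{n₁+n₂+n₃-2}`. -/
theorem statement12 :
    (∀ T : Tri, VSpace 1 1 1 T = {q : BPoly | q.totalDegree ≤ 1}) ∧
    (∀ n₁ n₂ n₃ : ℕ, 1 ≤ n₁ → 1 ≤ n₂ → 1 ≤ n₃ → ¬(n₁ = 1 ∧ n₂ = 1 ∧ n₃ = 1) →
      ∀ T : Tri,
        VSpace n₁ n₂ n₃ T ⊂ {q : BPoly | q.totalDegree ≤ n₁ + n₂ + n₃ - 2}) := by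
  refine ⟨fun T => ?_, fun n₁ n₂ n₃ h1 h2 h3 hn T => ?_⟩
  · ext q
    exact ⟨fun hq => BoxPf.deg_le le_rfl le_rfl le_rfl hq, fun hq => BoxPf.ge111 T hq⟩
  · refine ⟨fun q hq => BoxPf.deg_le h1 h2 h3 hq, fun hsub => ?_⟩
    obtain ⟨q, hq, hq'⟩ := BoxPf.proper h1 h2 h3 hn T
    exact hq' (hsub hq)

end
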